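/- arXiv:2604.24728 — 2 statements merged into one kernel-verified Lean document; each statement's English description precedes it below -/
import Mathlib

section
/- Let (X, p, θ) be a 0-complete partial extended b-metric space and let T : X → X satisfy p(Tx, Ty) ≤ k[p(x, Ty) + p(y, Ty)] for all x,y ∈ X, where k ∈ [0, 1/2), together with θ(Tx, x) < 1/k for all x ∈ X. If there exists x₀ ∈ X such that lim_{n→∞} n·p(Tⁿx₀, Tⁿx₀) = 0, then T has a unique fixed point u ∈ X; moreover p(u,u) = 0 and lim_{n→∞} p(Tⁿx₀, u) = 0. -/
open Filter Topology

/-!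
Putting the older of two iterates in the second slot of the contraction gives
`p (T x) (T x) ≤ 2k p x (T x)` and `p (T² x) (T x) ≤ k (p (T x) (T x) + p x (T x))`, so consecutive
distances along an orbit decay like `(2k)ⁿ`. The same choice of slots bounds every
`p (Tⁿ⁺¹ x) (T x)` by `p x (T x)`, by induction on `n`. No factor `θ` accumulates along the orbit,
which is therefore 0-Cauchy. The triangle inequality enters only through the uniqueness of limits,
with `θ` at a fixed pair of points; this identifies the limit of an orbit with its image under `T`.
-/

/-- 0-Cauchy sequences for a partial distance `p`: the double limit of `p (s n) (s m)` is `0`, taken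
along `atTop` on `ℕ × ℕ`. -/
def IsZeroCauchy {X : Type*} (p : X → X → ℝ) (s : ℕ → X) : Prop :=
  Tendsto (fun nm : ℕ × ℕ => p (s nm.1) (s nm.2)) atTop (𝓝 0)

/-- 0-completeness for a partial distance `p`: every 0-Cauchy sequence converges to a point of
self-distance `0`. It supplies the limit of an orbit. -/
def IsZeroComplete {X : Type*} (p : X → X → ℝ) : Prop :=
  ∀ s : ℕ → X, IsZeroCauchy p s → ∃ u : X, Tendsto (fun n => p (s n) u) atTop (𝓝 0) ∧ p u u = 0

/-- The modified Kannan contraction condition with constant `k`, satisfied by the map whose fixed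
point is sought; Kannan's condition has `p x (T x)` in place of `p x (T y)`. -/
def IsModifiedKannan {X : Type*} (p : X → X → ℝ) (T : X → X) (k : ℝ) : Prop :=
  ∀ x y, p (T x) (T y) ≤ k * (p x (T y) + p y (T y))

theorem tendsto_pow_mul_const_zero {r : ℝ} (hr0 : 0 ≤ r) (hr1 : r < 1) (c : ℝ) :
    Tendsto (fun n : ℕ => r ^ n * c) atTop (𝓝 0) := by
  simpa only [zero_mul] using (tendsto_pow_atTop_nhds_zero_of_lt_one hr0 hr1).mul_const c

section Separation

variable {X : Type*} {p : X → X → ℝ}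

theorem eq_of_partial_dist_eq_zero (hnonneg : ∀ x y, 0 ≤ p x y)
    (hsep : ∀ x y, p x x = p x y → p x y = p y y → x = y) (hself : ∀ x y, p x x ≤ p x y)
    (hsymm : ∀ x y, p x y = p y x) {x y : X} (hxy : p x y = 0) : x = y := by
  have self_eq_zero : ∀ {a b}, p a b = 0 → p a a = 0 := fun {a b} hab =>
    le_antisymm ((hself a b).trans_eq hab) (hnonneg a a)
  have hx : p x x = 0 := self_eq_zero hxy
  have hy : p y y = 0 := self_eq_zero ((hsymm y x).trans hxy)
  exact hsep x y (hx.trans hxy.symm) (hxy.trans hy.symm)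

theorem eq_of_tendsto_dist_zero {θ : X → X → ℝ} (hnonneg : ∀ x y, 0 ≤ p x y)
    (hsymm : ∀ x y, p x y = p y x) (hzero : ∀ x y, p x y = 0 → x = y)
    (htri : ∀ x y z, p x z ≤ θ x z * (p x y + p y z))
    {ι : Type*} {l : Filter ι} [l.NeBot] {s : ι → X} {u v : X}
    (hu : Tendsto (fun i => p (s i) u) l (𝓝 0)) (hv : Tendsto (fun i => p (s i) v) l (𝓝 0)) :
    u = v := by
  have hbound : ∀ i, p u v ≤ θ u v * (p (s i) u + p (s i) v) := fun i => by
    simpa only [hsymm u (s i)] using htri u (s i) v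
  have hlim : Tendsto (fun i => θ u v * (p (s i) u + p (s i) v)) l (𝓝 0) := by
    simpa only [add_zero, mul_zero] using (hu.add hv).const_mul (θ u v)
  exact hzero u v (le_antisymm (ge_of_tendsto' hlim hbound) (hnonneg u v))

end Separation

namespace IsModifiedKannan

variable {X : Type*} {p : X → X → ℝ} {T : X → X} {k : ℝ}

theorem self_map_le (hT : IsModifiedKannan p T k) (x : X) :
    p (T x) (T x) ≤ 2 * k * p x (T x) :=
  (hT x x).trans_eq (by ring)

theorem map_le_of_le (hT : IsModifiedKannan p T k) (hk0 : 0 ≤ k) {x y : X}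
    (h : p y (T x) ≤ p x (T x)) : p (T y) (T x) ≤ 2 * k * p x (T x) :=
  calc p (T y) (T x) ≤ k * (p y (T x) + p x (T x)) := hT y x
    _ ≤ k * (p x (T x) + p x (T x)) := by gcongr
    _ = 2 * k * p x (T x) := by ring

theorem iterate_succ_le (hT : IsModifiedKannan p T k) (hnonneg : ∀ x y, 0 ≤ p x y)
    (hk0 : 0 ≤ k) (hk1 : k ≤ 1 / 2) (x : X) (n : ℕ) :
    p (T^[n + 1] x) (T x) ≤ p x (T x) := by
  have two_mul_le : 2 * k * p x (T x) ≤ p x (T x) :=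
    mul_le_of_le_one_left (hnonneg _ _) (by linarith)
  induction n with
  | zero => exact (hT.self_map_le x).trans two_mul_le
  | succ n ih =>
    rw [Function.iterate_succ_apply']
    exact (hT.map_le_of_le hk0 ih).trans two_mul_le

theorem iterate_consecutive_le (hT : IsModifiedKannan p T k) (hnonneg : ∀ x y, 0 ≤ p x y)
    (hsymm : ∀ x y, p x y = p y x) (hk0 : 0 ≤ k) (hk1 : k ≤ 1 / 2) (x : X) (n : ℕ) :
    p (T^[n] x) (T (T^[n] x)) ≤ (2 * k) ^ n * p x (T x) := by
  induction n with
  | zero => simp only [Function.iterate_zero_apply, pow_zero, one_mul, le_refl]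
  | succ n ih =>
    rw [Function.iterate_succ_apply', hsymm]
    calc p (T (T (T^[n] x))) (T (T^[n] x)) ≤ 2 * k * p (T^[n] x) (T (T^[n] x)) :=
          hT.map_le_of_le hk0 (hT.iterate_succ_le hnonneg hk0 hk1 (T^[n] x) 0)
      _ ≤ 2 * k * ((2 * k) ^ n * p x (T x)) := by gcongr
      _ = (2 * k) ^ (n + 1) * p x (T x) := by ring

theorem iterate_succ_iterate_succ_le (hT : IsModifiedKannan p T k)
    (hnonneg : ∀ x y, 0 ≤ p x y) (hsymm : ∀ x y, p x y = p y x)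
    (hk0 : 0 ≤ k) (hk1 : k ≤ 1 / 2) (x : X) (m n : ℕ) :
    p (T^[m + 1] x) (T^[n + 1] x) ≤ (2 * k) ^ min m n * p x (T x) := by
  wlog hnm : n ≤ m generalizing m n
  · rw [hsymm, min_comm]
    exact this n m (le_of_not_ge hnm)
  obtain ⟨j, rfl⟩ := Nat.exists_eq_add_of_le' hnm
  rw [min_eq_right hnm, add_right_comm, Function.iterate_add_apply,
    Function.iterate_succ_apply' T n]
  exact (hT.iterate_succ_le hnonneg hk0 hk1 (T^[n] x) j).trans
    (hT.iterate_consecutive_le hnonneg hsymm hk0 hk1 x n)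

theorem tendsto_iterate_consecutive (hT : IsModifiedKannan p T k) (hnonneg : ∀ x y, 0 ≤ p x y)
    (hsymm : ∀ x y, p x y = p y x) (hk0 : 0 ≤ k) (hk1 : k < 1 / 2) (x : X) :
    Tendsto (fun n => p (T^[n] x) (T (T^[n] x))) atTop (𝓝 0) :=
  squeeze_zero (fun _ => hnonneg _ _) (hT.iterate_consecutive_le hnonneg hsymm hk0 hk1.le x)
    (tendsto_pow_mul_const_zero (by linarith) (by linarith) (p x (T x)))

theorem isZeroCauchy_iterate_succ (hT : IsModifiedKannan p T k) (hnonneg : ∀ x y, 0 ≤ p x y)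
    (hsymm : ∀ x y, p x y = p y x) (hk0 : 0 ≤ k) (hk1 : k < 1 / 2) (x : X) :
    IsZeroCauchy p (fun n => T^[n + 1] x) := by
  have hmin : Tendsto (fun mn : ℕ × ℕ => min mn.1 mn.2) atTop atTop :=
    tendsto_atTop_atTop.2 fun N => ⟨(N, N), fun _ hN => le_min hN.1 hN.2⟩
  exact squeeze_zero (fun _ => hnonneg _ _)
    (fun mn => hT.iterate_succ_iterate_succ_le hnonneg hsymm hk0 hk1.le x mn.1 mn.2)
    ((tendsto_pow_mul_const_zero (by linarith) (by linarith) (p x (T x))).comp hmin)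

theorem tendsto_map_apply (hT : IsModifiedKannan p T k) (hnonneg : ∀ x y, 0 ≤ p x y)
    (hsymm : ∀ x y, p x y = p y x) {ι : Type*} {l : Filter ι} {s : ι → X} {u : X}
    (hs : Tendsto (fun i => p (s i) (T (s i))) l (𝓝 0))
    (hu : Tendsto (fun i => p (T (s i)) u) l (𝓝 0)) :
    Tendsto (fun i => p (T (s i)) (T u)) l (𝓝 0) := by
  have hbound : ∀ i, p (T (s i)) (T u) ≤ k * (p (T (s i)) u + p (s i) (T (s i))) := fun i => by
    simpa only [hsymm (T (s i))] using hT u (s i)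
  have hlim : Tendsto (fun i => k * (p (T (s i)) u + p (s i) (T (s i)))) l (𝓝 0) := by
    simpa only [add_zero, mul_zero] using (hu.add hs).const_mul k
  exact squeeze_zero (fun _ => hnonneg _ _) hbound hlim

theorem self_eq_zero_of_isFixedPt (hT : IsModifiedKannan p T k) (hnonneg : ∀ x y, 0 ≤ p x y)
    (hk1 : k < 1 / 2) {u : X} (hu : Function.IsFixedPt T u) : p u u = 0 := by
  have hle : p u u ≤ 2 * k * p u u := by simpa only [hu.eq] using hT.self_map_le u
  nlinarith [hnonneg u u]

theorem dist_eq_zero_of_isFixedPt (hT : IsModifiedKannan p T k) (hnonneg : ∀ x y, 0 ≤ p x y)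
    (hk1 : k < 1 / 2) {u v : X} (hu : Function.IsFixedPt T u) (hv : Function.IsFixedPt T v) :
    p u v = 0 := by
  have hle : p u v ≤ k * p u v := by
    simpa only [hu.eq, hv.eq, hT.self_eq_zero_of_isFixedPt hnonneg hk1 hv, add_zero] using hT u v
  nlinarith [hnonneg u v]

end IsModifiedKannan

theorem pebms_modified_kannan_fixed_point_general {X : Type*} {p θ : X → X → ℝ}
    (hnonneg : ∀ x y, 0 ≤ p x y) (hsymm : ∀ x y, p x y = p y x)
    (hzero : ∀ x y, p x y = 0 → x = y) (htri : ∀ x y z, p x z ≤ θ x z * (p x y + p y z))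
    (hcomp : IsZeroComplete p) {T : X → X} {k : ℝ} (hk0 : 0 ≤ k) (hk1 : k < 1 / 2)
    (hT : IsModifiedKannan p T k) (x₀ : X) :
    ∃ u : X, T u = u ∧ p u u = 0 ∧ (∀ v : X, T v = v → v = u) ∧
      Tendsto (fun n => p (T^[n] x₀) u) atTop (𝓝 0) := by
  obtain ⟨u, hu, huu⟩ := hcomp _ (hT.isZeroCauchy_iterate_succ hnonneg hsymm hk0 hk1 x₀)
  have hu_map : Tendsto (fun n => p (T (T^[n] x₀)) u) atTop (𝓝 0) := by
    simpa only [Function.iterate_succ_apply'] using hu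
  have hTu_map : Tendsto (fun n => p (T (T^[n] x₀)) (T u)) atTop (𝓝 0) :=
    hT.tendsto_map_apply hnonneg hsymm
      (hT.tendsto_iterate_consecutive hnonneg hsymm hk0 hk1 x₀) hu_map
  have hfix : T u = u := eq_of_tendsto_dist_zero hnonneg hsymm hzero htri hTu_map hu_map
  exact ⟨u, hfix, huu,
    fun v hv => hzero v u (hT.dist_eq_zero_of_isFixedPt hnonneg hk1 hv hfix),
    (tendsto_add_atTop_iff_nat 1).1 hu⟩

/-- Modified Kannan-type fixed point theorem in a 0-complete
partial extended b-metric space, under the assumption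
`lim_{n→∞} n·p(Tⁿx₀, Tⁿx₀) = 0` for some `x₀`.  The condition
`θ(Tx,x) < 1/k` is rendered as `k * θ(Tx,x) < 1`. -/
theorem pebms_modified_kannan_fixed_point
    {X : Type*} [Nonempty X]
    (p : X → X → ℝ) (θ : X → X → ℝ)
    (hθ : ∀ x y, 1 ≤ θ x y)
    (hp_nonneg : ∀ x y, 0 ≤ p x y)
    (hP1 : ∀ x y, (p x x = p x y ∧ p x y = p y y) ↔ x = y)
    (hP2 : ∀ x y, p x x ≤ p x y)
    (hP3 : ∀ x y, p x y = p y x)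
    (hP4 : ∀ x y z, p x z ≤ θ x z * (p x y + p y z) - p y y)
    (hcomp : ∀ s : ℕ → X,
      Tendsto (fun nm : ℕ × ℕ => p (s nm.1) (s nm.2)) atTop (𝓝 0) →
      ∃ u : X, Tendsto (fun n => p (s n) u) atTop (𝓝 0) ∧ p u u = 0)
    (T : X → X) (k : ℝ) (hk0 : 0 ≤ k) (hk1 : k < 1/2)
    (hT : ∀ x y, p (T x) (T y) ≤ k * (p x (T y) + p y (T y)))
    (hθT : ∀ x : X, k * θ (T x) x < 1)
    (x₀ : X)
    (hx₀ : Tendsto (fun n : ℕ => (n : ℝ) * p (T^[n] x₀) (T^[n] x₀)) atTop (𝓝 0)) :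
    ∃ u : X, T u = u ∧ p u u = 0 ∧ (∀ v : X, T v = v → v = u) ∧
      Tendsto (fun n => p (T^[n] x₀) u) atTop (𝓝 0) :=
  pebms_modified_kannan_fixed_point_general hp_nonneg hP3
    (fun _ _ => eq_of_partial_dist_eq_zero hp_nonneg (fun x y h h' => (hP1 x y).1 ⟨h, h'⟩) hP2 hP3)
    (fun x y z => (hP4 x y z).trans (sub_le_self _ (hp_nonneg y y))) hcomp hk0 hk1 hT x₀
end

section
/- Let (X, p, θ) be a partial extended b-metric space, let T : X → X satisfy p(Tx, Ty) ≤ k·p(x,y) for all x,y ∈ X with k ∈ [0,1), let x₀ ∈ X and set xₙ = Tⁿx₀. If there is c with k·c < 1 such that θ(xₙ, xₘ) ≤ c for all sufficiently large n, m, then (xₙ) is a 0-Cauchy sequence, i.e. lim_{n,m→∞} p(xₙ, xₘ) = 0. -/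
open Filter Topology

/-!
If `θ ≤ c` along the tail of the orbit, choose `q` with `c * k ^ q < 1`: the iterate `T^[q]`
contracts strongly enough to beat `c`. Put `y = T^[N] x₀` and `a n = p y (T^[n] y)`. The triangle
inequality through `T^[q] y` gives `a (n + q) ≤ c * a q + c * k ^ q * a n`, so `a` is bounded by
some `B`, and contracting `min n m` times yields `p (T^[n] y) (T^[m] y) ≤ k ^ min n m * B`, which
tends to `0`.
-/

section Recurrence

variable {𝕜 : Type*} [Field 𝕜] [LinearOrder 𝕜] [IsStrictOrderedRing 𝕜]

theorem bddAbove_range_of_add_le_add_mul {a : ℕ → 𝕜} {b r : 𝕜} {q : ℕ} (hq : 0 < q)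
    (hr0 : 0 ≤ r) (hr1 : r < 1) (ha : ∀ n, a (n + q) ≤ b + r * a n) :
    BddAbove (Set.range a) := by
  obtain ⟨M, hM⟩ := ((Set.finite_lt_nat q).image a).bddAbove
  set B := max M (b / (1 - r))
  have hB : b + r * B ≤ B := by
    have : b ≤ B * (1 - r) := (div_le_iff₀ (sub_pos.2 hr1)).1 (le_max_right _ _)
    linarith
  refine ⟨B, Set.forall_mem_range.2 fun n => ?_⟩
  induction n using Nat.strong_induction_on with
  | _ n ih =>
    obtain hn | hn := lt_or_ge n q
    · exact (hM (Set.mem_image_of_mem a hn)).trans (le_max_left _ _)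
    · obtain ⟨m, rfl⟩ := Nat.exists_eq_add_of_le' hn
      calc a (m + q) ≤ b + r * a m := ha m
        _ ≤ b + r * B := by gcongr; exact ih m (Nat.lt_add_of_pos_right hq)
        _ ≤ B := hB

end Recurrence

section OrderedSemiring

variable {X R : Type*} [Semiring R] [PartialOrder R] [IsOrderedRing R]
  {p : X → X → R} {T : X → X} {k : R}

theorem iterate_le_pow_mul (hk0 : 0 ≤ k) (hT : ∀ x y, p (T x) (T y) ≤ k * p x y)
    (n : ℕ) (x y : X) : p (T^[n] x) (T^[n] y) ≤ k ^ n * p x y := by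
  induction n with
  | zero => simp
  | succ n ih =>
    rw [Function.iterate_succ_apply', Function.iterate_succ_apply', pow_succ', mul_assoc]
    exact (hT _ _).trans (mul_le_mul_of_nonneg_left ih hk0)

theorem orbit_le_pow_min_mul (hp_symm : ∀ x y, p x y = p y x) (hk0 : 0 ≤ k)
    (hT : ∀ x y, p (T x) (T y) ≤ k * p x y) {y : X} {B : R} (hB : ∀ n, p y (T^[n] y) ≤ B)
    (n m : ℕ) : p (T^[n] y) (T^[m] y) ≤ k ^ min n m * B := by
  wlog hnm : n ≤ m generalizing n m
  · rw [hp_symm, min_comm]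
    exact this m n (le_of_not_ge hnm)
  obtain ⟨j, rfl⟩ := Nat.exists_eq_add_of_le hnm
  rw [min_eq_left hnm, Function.iterate_add_apply]
  exact (iterate_le_pow_mul hk0 hT n _ _).trans
    (mul_le_mul_of_nonneg_left (hB j) (pow_nonneg hk0 n))

end OrderedSemiring

theorem tendsto_min_atTop {α : Type*} [LinearOrder α] :
    Tendsto (fun nm : α × α => min nm.1 nm.2) atTop atTop :=
  tendsto_atTop_atTop_of_monotone (fun _ _ h => min_le_min h.1 h.2)
    fun b => ⟨(b, b), (min_self b).ge⟩

theorem tendsto_prod_nat_add_iff {α : Type*} {l : Filter α} {f : ℕ × ℕ → α} (N : ℕ) :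
    Tendsto (fun nm : ℕ × ℕ => f (nm.1 + N, nm.2 + N)) atTop l ↔ Tendsto f atTop l := by
  have hmap : map (Prod.map (· + N) (· + N)) (atTop : Filter (ℕ × ℕ)) = atTop := by
    rw [← prod_map_atTop_eq, map_add_atTop_eq_nat, prod_atTop_atTop_eq]
  conv_rhs => rw [← hmap, tendsto_map'_iff]
  rfl

section Contraction

variable {X : Type*} {p θ : X → X → ℝ} {T : X → X} {k : ℝ}

theorem exists_pos_mul_pow_lt_one (hk0 : 0 ≤ k) (hk1 : k < 1) (c : ℝ) :
    ∃ q : ℕ, 0 < q ∧ c * k ^ q < 1 := by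
  have hlim : Tendsto (fun q : ℕ => c * k ^ q) atTop (𝓝 0) := by
    simpa using (tendsto_pow_atTop_nhds_zero_of_lt_one hk0 hk1).const_mul c
  exact ((eventually_gt_atTop 0).and (hlim.eventually_lt_const one_pos)).exists

theorem bddAbove_range_orbit (hp_nonneg : ∀ x y, 0 ≤ p x y)
    (hp_triangle : ∀ x y z, p x z ≤ θ x z * (p x y + p y z)) (hk0 : 0 ≤ k) (hk1 : k < 1)
    (hT : ∀ x y, p (T x) (T y) ≤ k * p x y) {y : X}
    (hθ : BddAbove (Set.range fun n => θ y (T^[n] y))) :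
    BddAbove (Set.range fun n => p y (T^[n] y)) := by
  obtain ⟨c, hc0, hc⟩ := hθ.exists_ge 0
  obtain ⟨q, hq, hcq⟩ := exists_pos_mul_pow_lt_one hk0 hk1 c
  refine bddAbove_range_of_add_le_add_mul (b := c * p y (T^[q] y)) hq
    (mul_nonneg hc0 (pow_nonneg hk0 q)) hcq fun n => ?_
  have hcontr : p (T^[q] y) (T^[n + q] y) ≤ k ^ q * p y (T^[n] y) := by
    rw [add_comm, Function.iterate_add_apply]
    exact iterate_le_pow_mul hk0 hT q _ _
  calc p y (T^[n + q] y)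
      ≤ θ y (T^[n + q] y) * (p y (T^[q] y) + p (T^[q] y) (T^[n + q] y)) := hp_triangle _ _ _
    _ ≤ c * (p y (T^[q] y) + p (T^[q] y) (T^[n + q] y)) :=
        mul_le_mul_of_nonneg_right (hc _ (Set.mem_range_self _))
          (add_nonneg (hp_nonneg _ _) (hp_nonneg _ _))
    _ ≤ c * (p y (T^[q] y) + k ^ q * p y (T^[n] y)) := by gcongr
    _ = c * p y (T^[q] y) + c * k ^ q * p y (T^[n] y) := by ring

theorem tendsto_orbit_of_bddAbove (hp_nonneg : ∀ x y, 0 ≤ p x y)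
    (hp_symm : ∀ x y, p x y = p y x) (hk0 : 0 ≤ k) (hk1 : k < 1)
    (hT : ∀ x y, p (T x) (T y) ≤ k * p x y) {y : X}
    (hy : BddAbove (Set.range fun n => p y (T^[n] y))) :
    Tendsto (fun nm : ℕ × ℕ => p (T^[nm.1] y) (T^[nm.2] y)) atTop (𝓝 0) := by
  obtain ⟨B, hB⟩ := hy
  have hlim : Tendsto (fun nm : ℕ × ℕ => k ^ min nm.1 nm.2 * B) atTop (𝓝 0) := by
    simpa using ((tendsto_pow_atTop_nhds_zero_of_lt_one hk0 hk1).comp tendsto_min_atTop).mul_const B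
  exact squeeze_zero (fun _ => hp_nonneg _ _)
    (fun nm => orbit_le_pow_min_mul hp_symm hk0 hT (Set.forall_mem_range.1 hB) nm.1 nm.2) hlim

theorem pebms_contraction_orbit_zero_cauchy_general (hp_nonneg : ∀ x y, 0 ≤ p x y)
    (hp_symm : ∀ x y, p x y = p y x)
    (hp_triangle : ∀ x y z, p x z ≤ θ x z * (p x y + p y z)) (hk0 : 0 ≤ k) (hk1 : k < 1)
    (hT : ∀ x y, p (T x) (T y) ≤ k * p x y) {x₀ : X} {c : ℝ} {N : ℕ}
    (hθ : ∀ n ≥ N, θ (T^[N] x₀) (T^[n] x₀) ≤ c) :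
    Tendsto (fun nm : ℕ × ℕ => p (T^[nm.1] x₀) (T^[nm.2] x₀)) atTop (𝓝 0) := by
  have hθ_bdd : BddAbove (Set.range fun n => θ (T^[N] x₀) (T^[n] (T^[N] x₀))) := by
    refine ⟨c, Set.forall_mem_range.2 fun n => ?_⟩
    rw [← Function.iterate_add_apply]
    exact hθ _ (Nat.le_add_left N n)
  have hp_bdd := bddAbove_range_orbit hp_nonneg hp_triangle hk0 hk1 hT hθ_bdd
  refine (tendsto_prod_nat_add_iff N).1 ?_
  simpa only [Function.iterate_add_apply] using
    tendsto_orbit_of_bddAbove hp_nonneg hp_symm hk0 hk1 hT hp_bdd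

end Contraction

/-- In a partial extended b-metric space, the Picard orbit of a
contraction `T` (with the control-function condition) is a 0-Cauchy sequence. -/
theorem pebms_contraction_orbit_zero_cauchy
    {X : Type*}
    (p : X → X → ℝ) (θ : X → X → ℝ)
    (hθ : ∀ x y, 1 ≤ θ x y)
    (hp_nonneg : ∀ x y, 0 ≤ p x y)
    (hP1 : ∀ x y, (p x x = p x y ∧ p x y = p y y) ↔ x = y)
    (hP2 : ∀ x y, p x x ≤ p x y)
    (hP3 : ∀ x y, p x y = p y x)
    (hP4 : ∀ x y z, p x z ≤ θ x z * (p x y + p y z) - p y y)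
    (T : X → X) (k : ℝ) (hk0 : 0 ≤ k) (hk1 : k < 1)
    (hT : ∀ x y, p (T x) (T y) ≤ k * p x y)
    (x₀ : X)
    (hθlim : ∃ c : ℝ, k * c < 1 ∧
      ∃ N : ℕ, ∀ n ≥ N, ∀ m ≥ N, θ (T^[n] x₀) (T^[m] x₀) ≤ c) :
    Tendsto (fun nm : ℕ × ℕ => p (T^[nm.1] x₀) (T^[nm.2] x₀)) atTop (𝓝 0) := by
  obtain ⟨c, -, N, hN⟩ := hθlim
  exact pebms_contraction_orbit_zero_cauchy_general hp_nonneg hP3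
    (fun x y z => (hP4 x y z).trans (sub_le_self _ (hp_nonneg y y))) hk0 hk1 hT (hN N le_rfl)
end
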